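/- Let γ ∈ [0, π/2) and C > 0 satisfy −4·C·sin(γ/2) + 2·cos γ < 0 (i.e. F′(π) < 0). Then F has exactly two critical points in (0, π): there exist φ₁ ∈ (0, π/2) and φ₂ ∈ (3π/4, π) with F′(φ₁) = F′(φ₂) = 0, and F′(φ) < 0 for φ ∈ [0, φ₁), F′(φ) > 0 for φ ∈ (φ₁, φ₂), and F′(φ) < 0 for φ ∈ (φ₂, π]. -/

import Mathlib

/-!
Write `m = max (3π/4) (π - γ)`. The derivative `F'` is negative at both ends of `[0, π]`, strictly
increasing on `[0, π/2]`, positive on `[π/2, m]` and strictly decreasing on `[m, π]`, so it crosses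
zero exactly once in `(0, π/2)` and once in `(m, π)`. Both monotonicity claims are read off the
signs of the terms of `F''`, which change when `φ` passes `π/2` and when `φ + γ` passes `π`. For
positivity, the terms of `F'` of order `0` and `2` in `C` are clearly nonnegative, and the linear
one is so because `2 cos ((φ + γ)/2) cos φ ≤ sin ((φ + γ)/2) sin φ`: up to `φ + γ = π` the left side
is nonpositive, and beyond it, up to `φ = 3π/4`, both `φ` and `(φ + γ)/2` are close enough to `π/2`
for the sines to dominate.
-/

open Real Set

section Crossing

variable {α δ : Type*} [ConditionallyCompleteLinearOrder α] [DenselyOrdered α]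
  [TopologicalSpace α] [OrderTopology α] [LinearOrder δ] [TopologicalSpace δ]
  [OrderClosedTopology δ] {f : α → δ} {a b c d : α} {y : δ}

lemma exists_eq_and_lt_and_gt_of_strictMonoOn (hab : a ≤ b) (hcont : ContinuousOn f (Icc a b))
    (hmono : StrictMonoOn f (Icc a b)) (ha : f a < y) (hb : y < f b) :
    ∃ x₀ ∈ Ioo a b, f x₀ = y ∧ (∀ x ∈ Ico a x₀, f x < y) ∧ ∀ x ∈ Ioc x₀ b, y < f x := by
  obtain ⟨x₀, hx₀, rfl⟩ := intermediate_value_Ioo hab hcont ⟨ha, hb⟩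
  have hmem : x₀ ∈ Icc a b := Ioo_subset_Icc_self hx₀
  exact ⟨x₀, hx₀, rfl,
    fun x hx => hmono ⟨hx.1, hx.2.le.trans hmem.2⟩ hmem hx.2,
    fun x hx => hmono hmem ⟨hmem.1.trans hx.1.le, hx.2⟩ hx.1⟩

lemma exists_eq_and_gt_and_lt_of_strictAntiOn (hab : a ≤ b) (hcont : ContinuousOn f (Icc a b))
    (hanti : StrictAntiOn f (Icc a b)) (ha : y < f a) (hb : f b < y) :
    ∃ x₀ ∈ Ioo a b, f x₀ = y ∧ (∀ x ∈ Ico a x₀, y < f x) ∧ ∀ x ∈ Ioc x₀ b, f x < y :=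
  exists_eq_and_lt_and_gt_of_strictMonoOn (δ := δᵒᵈ) hab hcont hanti.dual_right ha hb

theorem exists_two_crossings_of_strictMonoOn_of_strictAntiOn (hab : a ≤ b) (hbc : b ≤ c)
    (hcd : c ≤ d) (hcont : ContinuousOn f (Icc a d)) (hmono : StrictMonoOn f (Icc a b))
    (hmid : ∀ x ∈ Icc b c, y < f x) (hanti : StrictAntiOn f (Icc c d))
    (ha : f a < y) (hd : f d < y) :
    ∃ x₁ ∈ Ioo a b, ∃ x₂ ∈ Ioo c d, f x₁ = y ∧ f x₂ = y ∧
      (∀ x ∈ Ico a x₁, f x < y) ∧ (∀ x ∈ Ioo x₁ x₂, y < f x) ∧ ∀ x ∈ Ioc x₂ d, f x < y := by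
  obtain ⟨x₁, hx₁, hfx₁, hbefore, hafter₁⟩ := exists_eq_and_lt_and_gt_of_strictMonoOn hab
    (hcont.mono (Icc_subset_Icc_right (hbc.trans hcd))) hmono ha (hmid b ⟨le_rfl, hbc⟩)
  obtain ⟨x₂, hx₂, hfx₂, hbefore₂, hafter⟩ := exists_eq_and_gt_and_lt_of_strictAntiOn hcd
    (hcont.mono (Icc_subset_Icc_left (hab.trans hbc))) hanti (hmid c ⟨hbc, le_rfl⟩) hd
  refine ⟨x₁, hx₁, x₂, hx₂, hfx₁, hfx₂, hbefore, fun x hx => ?_, hafter⟩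
  rcases le_total x b with hxb | hbx
  · exact hafter₁ x ⟨hx.1, hxb⟩
  rcases le_total x c with hxc | hcx
  · exact hmid x ⟨hbx, hxc⟩
  · exact hbefore₂ x ⟨hcx, hx.2⟩

end Crossing

section Trigonometry

variable {k x : ℝ}

lemma cos_le_neg_sqrt_two_div_two (hx : x ∈ Icc (3 * π / 4) (5 * π / 4)) :
    cos x ≤ -(√2 / 2) := by
  have habs : |x - π| ≤ π / 4 := abs_le.2 ⟨by linarith [hx.1], by linarith [hx.2]⟩
  have hcos : cos (π / 4) ≤ cos |x - π| :=
    cos_le_cos_of_nonneg_of_le_pi (abs_nonneg _) (by linarith [pi_pos]) habs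
  rw [cos_abs, cos_sub_pi, cos_pi_div_four] at hcos
  linarith

lemma mul_abs_cos_le_sin (hsin : 0 ≤ sin x) (hcos : (k ^ 2 + 1) * cos (2 * x) ≤ 1 - k ^ 2) :
    k * |cos x| ≤ sin x := by
  refine le_of_sq_le_sq ?_ hsin
  rw [mul_pow, sq_abs, sin_sq]
  rw [cos_two_mul] at hcos
  linarith

end Trigonometry

/-- The dimensionless total force `F`, as a function of the angle `φ`. -/
noncomputable def totalForce (γ A C φ : ℝ) : ℝ :=
  -A * C ^ 2 - 2 * sin (φ + γ) - 4 * C * cos ((φ + γ) / 2) * sin φ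
    - (1 / 2) * C ^ 2 * sin (2 * φ) + C ^ 2 * φ

/-- The derivative `F'` of the total force in `φ`, sorted by powers of `C`; it does not depend
on `A`. -/
noncomputable def totalForceDeriv (γ C φ : ℝ) : ℝ :=
  -2 * cos (φ + γ)
    + 2 * C * (sin ((φ + γ) / 2) * sin φ - 2 * (cos ((φ + γ) / 2) * cos φ))
    + 2 * C ^ 2 * sin φ ^ 2

/-- The second derivative `F''` of the total force in `φ`, sorted by powers of `C`. -/
noncomputable def totalForceSecondDeriv (γ C φ : ℝ) : ℝ :=
  2 * sin (φ + γ)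
    + C * (5 * (cos ((φ + γ) / 2) * sin φ) + 4 * (sin ((φ + γ) / 2) * cos φ))
    + 4 * C ^ 2 * (sin φ * cos φ)

section TotalForce

lemma hasDerivAt_totalForce (γ A C φ : ℝ) :
    HasDerivAt (totalForce γ A C) (totalForceDeriv γ C φ) φ := by
  have hadd : HasDerivAt (fun x : ℝ => x + γ) 1 φ := (hasDerivAt_id' φ).add_const γ
  have hdouble : HasDerivAt (fun x : ℝ => 2 * x) (2 * 1) φ := (hasDerivAt_id' φ).const_mul 2
  have h := (((hadd.sin.const_mul 2).const_sub (-A * C ^ 2)).sub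
    (((hadd.div_const 2).cos.const_mul (4 * C)).mul (hasDerivAt_sin φ))).sub
    (hdouble.sin.const_mul ((1 / 2) * C ^ 2)) |>.add ((hasDerivAt_id' φ).const_mul (C ^ 2))
  refine h.congr_deriv ?_
  rw [cos_two_mul, totalForceDeriv, sin_sq]
  ring

lemma deriv_totalForce (γ A C : ℝ) : deriv (totalForce γ A C) = totalForceDeriv γ C :=
  funext fun φ => (hasDerivAt_totalForce γ A C φ).deriv

lemma hasDerivAt_totalForceDeriv (γ C φ : ℝ) :
    HasDerivAt (totalForceDeriv γ C) (totalForceSecondDeriv γ C φ) φ := by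
  have hadd : HasDerivAt (fun x : ℝ => x + γ) 1 φ := (hasDerivAt_id' φ).add_const γ
  have hhalf := hadd.div_const 2
  have h := ((hadd.cos.const_mul (-2)).add
    (((hhalf.sin.mul (hasDerivAt_sin φ)).sub
      ((hhalf.cos.mul (hasDerivAt_cos φ)).const_mul 2)).const_mul (2 * C))).add
    (((hasDerivAt_sin φ).pow 2).const_mul (2 * C ^ 2))
  refine h.congr_deriv ?_
  rw [totalForceSecondDeriv]
  push_cast
  ring

lemma continuous_totalForceDeriv (γ C : ℝ) : Continuous (totalForceDeriv γ C) :=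
  continuous_iff_continuousAt.2 fun φ => (hasDerivAt_totalForceDeriv γ C φ).continuousAt

lemma totalForceDeriv_zero (γ C : ℝ) :
    totalForceDeriv γ C 0 = -2 * cos γ - 4 * C * cos (γ / 2) := by
  simp only [totalForceDeriv, zero_add, sin_zero, cos_zero]
  ring

lemma totalForceDeriv_pi (γ C : ℝ) :
    totalForceDeriv γ C π = -4 * C * sin (γ / 2) + 2 * cos γ := by
  have hhalf : cos ((π + γ) / 2) = -sin (γ / 2) := by
    rw [← cos_add_pi_div_two, add_div, add_comm]
  rw [totalForceDeriv, hhalf, add_comm π γ, cos_add_pi, sin_pi, cos_pi]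
  ring

variable {γ C φ : ℝ}

lemma totalForceDeriv_zero_neg (hγ : γ ∈ Ioo (-(π / 2)) (π / 2)) (hC : 0 ≤ C) :
    totalForceDeriv γ C 0 < 0 := by
  have hcos : 0 < cos γ := cos_pos_of_mem_Ioo hγ
  have hcosHalf : 0 ≤ cos (γ / 2) :=
    cos_nonneg_of_mem_Icc ⟨by linarith [hγ.1, pi_pos], by linarith [hγ.2, pi_pos]⟩
  have hlin : 0 ≤ C * cos (γ / 2) := mul_nonneg hC hcosHalf
  rw [totalForceDeriv_zero]
  linarith

lemma totalForceSecondDeriv_pos (hC : 0 ≤ C) (hφ : φ ∈ Ioo 0 (π / 2))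
    (hadd : φ + γ ∈ Ioo 0 π) : 0 < totalForceSecondDeriv γ C φ := by
  obtain ⟨hφ0, hφ1⟩ := hφ
  obtain ⟨hadd0, hadd1⟩ := hadd
  have hsin : 0 < sin (φ + γ) := sin_pos_of_pos_of_lt_pi hadd0 hadd1
  have hcosHalf : 0 < cos ((φ + γ) / 2) := cos_pos_of_mem_Ioo ⟨by linarith, by linarith⟩
  have hsinHalf : 0 < sin ((φ + γ) / 2) := sin_pos_of_pos_of_lt_pi (by linarith) (by linarith)
  have hsinφ : 0 < sin φ := sin_pos_of_pos_of_lt_pi hφ0 (by linarith)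
  have hcosφ : 0 < cos φ := cos_pos_of_mem_Ioo ⟨by linarith, hφ1⟩
  rw [totalForceSecondDeriv]
  positivity

lemma totalForceSecondDeriv_neg (hC : 0 ≤ C) (hφ : φ ∈ Ioo (π / 2) π)
    (hadd : φ + γ ∈ Ioo π (2 * π)) : totalForceSecondDeriv γ C φ < 0 := by
  obtain ⟨hφ0, hφ1⟩ := hφ
  obtain ⟨hadd0, hadd1⟩ := hadd
  have hsin : sin (φ + γ) < 0 := by
    rw [← sin_sub_two_pi]
    exact sin_neg_of_neg_of_neg_pi_lt (by linarith) (by linarith)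
  have hcosHalf : cos ((φ + γ) / 2) < 0 :=
    cos_neg_of_pi_div_two_lt_of_lt (by linarith) (by linarith)
  have hsinHalf : 0 < sin ((φ + γ) / 2) := sin_pos_of_pos_of_lt_pi (by linarith) (by linarith)
  have hsinφ : 0 < sin φ := sin_pos_of_pos_of_lt_pi (by linarith) hφ1
  have hcosφ : cos φ < 0 := cos_neg_of_pi_div_two_lt_of_lt hφ0 (by linarith)
  have hlin : C * (5 * (cos ((φ + γ) / 2) * sin φ) + 4 * (sin ((φ + γ) / 2) * cos φ)) ≤ 0 :=
    mul_nonpos_of_nonneg_of_nonpos hC (by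
      linarith [mul_neg_of_neg_of_pos hcosHalf hsinφ, mul_neg_of_pos_of_neg hsinHalf hcosφ])
  have hquad : 4 * C ^ 2 * (sin φ * cos φ) ≤ 0 :=
    mul_nonpos_of_nonneg_of_nonpos (by positivity) (mul_neg_of_pos_of_neg hsinφ hcosφ).le
  rw [totalForceSecondDeriv]
  linarith

lemma strictMonoOn_totalForceDeriv (hγ : 0 ≤ γ) (hC : 0 ≤ C) :
    StrictMonoOn (totalForceDeriv γ C) (Icc 0 (min (π / 2) (π - γ))) := by
  refine strictMonoOn_of_deriv_pos (convex_Icc _ _)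
    (continuous_totalForceDeriv γ C).continuousOn fun φ hφ => ?_
  rw [interior_Icc] at hφ
  obtain ⟨hlt, hlt'⟩ := lt_min_iff.1 hφ.2
  rw [(hasDerivAt_totalForceDeriv γ C φ).deriv]
  exact totalForceSecondDeriv_pos hC ⟨hφ.1, hlt⟩ ⟨by linarith [hφ.1], by linarith⟩

lemma strictAntiOn_totalForceDeriv (hγ : γ ≤ π) (hC : 0 ≤ C) :
    StrictAntiOn (totalForceDeriv γ C) (Icc (max (π / 2) (π - γ)) π) := by
  refine strictAntiOn_of_deriv_neg (convex_Icc _ _)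
    (continuous_totalForceDeriv γ C).continuousOn fun φ hφ => ?_
  rw [interior_Icc] at hφ
  obtain ⟨hlt, hlt'⟩ := max_lt_iff.1 hφ.1
  rw [(hasDerivAt_totalForceDeriv γ C φ).deriv]
  exact totalForceSecondDeriv_neg hC ⟨hlt, hφ.2⟩ ⟨by linarith, by linarith [hφ.2]⟩

lemma totalForceDeriv_pos_of_cos_mul_cos_le_sin_mul_sin (hC : 0 < C) (hsin : sin φ ≠ 0)
    (hcos : cos (φ + γ) ≤ 0)
    (hle : 2 * (cos ((φ + γ) / 2) * cos φ) ≤ sin ((φ + γ) / 2) * sin φ) :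
    0 < totalForceDeriv γ C φ := by
  have hlin : 0 ≤ 2 * C * (sin ((φ + γ) / 2) * sin φ - 2 * (cos ((φ + γ) / 2) * cos φ)) :=
    mul_nonneg (by positivity) (sub_nonneg.2 hle)
  have hquad : 0 < 2 * C ^ 2 * sin φ ^ 2 := by positivity
  rw [totalForceDeriv]
  linarith

lemma totalForceDeriv_pos_of_add_le_pi (hC : 0 < C) (hφ : φ ∈ Ico (π / 2) π)
    (hadd : φ + γ ∈ Icc (π / 2) π) : 0 < totalForceDeriv γ C φ := by
  obtain ⟨hφ0, hφ1⟩ := hφ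
  obtain ⟨hadd0, hadd1⟩ := hadd
  have hsinφ : 0 < sin φ := sin_pos_of_pos_of_lt_pi (by linarith) hφ1
  have hcosφ : cos φ ≤ 0 := cos_nonpos_of_pi_div_two_le_of_le hφ0 (by linarith)
  have hcosHalf : 0 ≤ cos ((φ + γ) / 2) := cos_nonneg_of_mem_Icc ⟨by linarith, by linarith⟩
  have hsinHalf : 0 ≤ sin ((φ + γ) / 2) :=
    sin_nonneg_of_nonneg_of_le_pi (by linarith) (by linarith)
  refine totalForceDeriv_pos_of_cos_mul_cos_le_sin_mul_sin hC hsinφ.ne'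
    (cos_nonpos_of_pi_div_two_le_of_le hadd0 (by linarith)) ?_
  calc 2 * (cos ((φ + γ) / 2) * cos φ) ≤ 0 :=
        mul_nonpos_of_nonneg_of_nonpos zero_le_two (mul_nonpos_of_nonneg_of_nonpos hcosHalf hcosφ)
    _ ≤ sin ((φ + γ) / 2) * sin φ := mul_nonneg hsinHalf hsinφ.le

lemma totalForceDeriv_pos_of_mem_Icc_pi_div_four (hC : 0 < C)
    (hφ : φ ∈ Icc (π / 4) (3 * π / 4)) (hadd : φ + γ ∈ Icc (3 * π / 4) (5 * π / 4)) :
    0 < totalForceDeriv γ C φ := by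
  have hcos : cos (φ + γ) ≤ -(3 / 5) := by
    have hsqrt : 6 / 5 ≤ √2 := le_sqrt_of_sq_le (by norm_num)
    linarith [cos_le_neg_sqrt_two_div_two hadd]
  obtain ⟨hφ0, hφ1⟩ := hφ
  obtain ⟨hadd0, hadd1⟩ := hadd
  have hpi := pi_pos
  have hsinφ : 0 < sin φ := sin_pos_of_pos_of_lt_pi (by linarith) (by linarith)
  have hsinHalf : 0 ≤ sin ((φ + γ) / 2) :=
    sin_nonneg_of_nonneg_of_le_pi (by linarith) (by linarith)
  have hφ_le : 1 * |cos φ| ≤ sin φ := by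
    refine mul_abs_cos_le_sin hsinφ.le ?_
    linarith [cos_nonpos_of_pi_div_two_le_of_le (x := 2 * φ) (by linarith) (by linarith)]
  have hhalf_le : 2 * |cos ((φ + γ) / 2)| ≤ sin ((φ + γ) / 2) := by
    refine mul_abs_cos_le_sin hsinHalf ?_
    rw [mul_div_cancel₀ (φ + γ) two_ne_zero]
    linarith
  refine totalForceDeriv_pos_of_cos_mul_cos_le_sin_mul_sin hC hsinφ.ne' (by linarith) ?_
  calc 2 * (cos ((φ + γ) / 2) * cos φ) ≤ 2 * |cos ((φ + γ) / 2) * cos φ| := by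
        gcongr
        exact le_abs_self _
    _ = (2 * |cos ((φ + γ) / 2)|) * (1 * |cos φ|) := by rw [abs_mul]; ring
    _ ≤ sin ((φ + γ) / 2) * sin φ := by gcongr

lemma totalForceDeriv_pos_of_le_max (hγ : γ ∈ Ioc 0 (π / 2)) (hC : 0 < C)
    (hφ : φ ∈ Icc (π / 2) (max (3 * π / 4) (π - γ))) : 0 < totalForceDeriv γ C φ := by
  obtain ⟨hγ0, hγ1⟩ := hγ
  obtain ⟨hφ0, hφm⟩ := hφ
  rcases le_or_gt (φ + γ) π with hle | hgt
  · exact totalForceDeriv_pos_of_add_le_pi hC ⟨hφ0, by linarith⟩ ⟨by linarith, hle⟩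
  · have hφ1 : φ ≤ 3 * π / 4 := (le_max_iff.1 hφm).resolve_right (by linarith)
    exact totalForceDeriv_pos_of_mem_Icc_pi_div_four hC ⟨by linarith, hφ1⟩
      ⟨by linarith, by linarith⟩

end TotalForce

/-- For `γ ∈ [0, π/2)` and `C > 0` with `−4·C·sin(γ/2) + 2·cos γ < 0` (i.e. `F′(π) < 0`), the
dimensionless total force has exactly two critical points in `(0, π)`: one in `(0, π/2)` and
one in `(3π/4, π)`, with `F′ < 0` before the first, `F′ > 0` between them, `F′ < 0` after. -/
theorem total_force_two_critical_points_acute (γ A C : ℝ)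
    (hγ : γ ∈ Set.Ico (0 : ℝ) (Real.pi / 2)) (hA : 0 < A) (hC : 0 < C)
    (hcond : -4 * C * Real.sin (γ / 2) + 2 * Real.cos γ < 0)
    (F : ℝ → ℝ)
    (hF : F = fun φ => -A * C ^ 2 - 2 * Real.sin (φ + γ)
      - 4 * C * Real.cos ((φ + γ) / 2) * Real.sin φ
      - (1 / 2) * C ^ 2 * Real.sin (2 * φ) + C ^ 2 * φ) :
    ∃ φ₁ ∈ Set.Ioo (0 : ℝ) (Real.pi / 2), ∃ φ₂ ∈ Set.Ioo (3 * Real.pi / 4) Real.pi,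
      deriv F φ₁ = 0 ∧ deriv F φ₂ = 0 ∧
      (∀ φ ∈ Set.Ico (0 : ℝ) φ₁, deriv F φ < 0) ∧
      (∀ φ ∈ Set.Ioo φ₁ φ₂, 0 < deriv F φ) ∧
      (∀ φ ∈ Set.Ioc φ₂ Real.pi, deriv F φ < 0) := by
  obtain rfl : F = totalForce γ A C := hF
  obtain ⟨hγ0, hγ1⟩ := hγ
  have hγpos : 0 < γ := by
    refine hγ0.lt_of_ne fun h => ?_
    norm_num [← h] at hcond
  have hmono : StrictMonoOn (totalForceDeriv γ C) (Icc 0 (π / 2)) := by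
    simpa only [min_eq_left (by linarith : π / 2 ≤ π - γ)] using
      strictMonoOn_totalForceDeriv hγ0 hC.le
  have hanti : StrictAntiOn (totalForceDeriv γ C) (Icc (max (3 * π / 4) (π - γ)) π) :=
    (strictAntiOn_totalForceDeriv (by linarith) hC.le).mono
      (Icc_subset_Icc_left (max_le_max_right _ (by linarith)))
  rw [deriv_totalForce]
  obtain ⟨φ₁, hφ₁, φ₂, hφ₂, hsigns⟩ := exists_two_crossings_of_strictMonoOn_of_strictAntiOn
    (by linarith) (le_max_of_le_left (by linarith)) (max_le (by linarith) (by linarith))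
    (continuous_totalForceDeriv γ C).continuousOn hmono
    (fun φ hφ => totalForceDeriv_pos_of_le_max ⟨hγpos, hγ1.le⟩ hC hφ) hanti
    (totalForceDeriv_zero_neg ⟨by linarith, hγ1⟩ hC.le) (by rwa [totalForceDeriv_pi])
  exact ⟨φ₁, hφ₁, φ₂, ⟨(le_max_left _ _).trans_lt hφ₂.1, hφ₂.2⟩, hsigns⟩
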